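/- Let n ≥ 1 and v ∈ 𝔖_{n+1}, and let S_p(v) = {v(n+2−p),…,v(n+1)} for 1 ≤ p ≤ n be the associated maximal chain. For x ∈ ℝⁿ write x̃_s = x_s for 1 ≤ s ≤ n and x̃_{n+1} = 0. Then the cone of nonnegative real combinations of u_{S_1(v)}, u_{S_2(v)}, …, u_{S_n(v)} equals the set {x ∈ ℝⁿ : x̃_{v(1)} ≤ x̃_{v(2)} ≤ ⋯ ≤ x̃_{v(n+1)}}; that is, each maximal cone of the permutohedral fan is a closed Weyl chamber of type Aₙ. -/

import Mathlib

/-- The standard basis vector `e_s` of `ℤⁿ` for `s ∈ [n+1]`, with the convention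
that the vector corresponding to the last element `n+1` is zero. -/
def permEps (n : ℕ) (s : Fin (n + 1)) : Fin n → ℤ :=
  fun i => if (i : ℕ) = (s : ℕ) then 1 else 0

/-- The ray generator `u_S` of the permutohedral fan, for `∅ ⊊ S ⊊ [n+1]`. -/
def permU (n : ℕ) (S : Finset (Fin (n + 1))) : Fin n → ℤ :=
  if Fin.last n ∈ S then -∑ s ∈ Sᶜ, permEps n s else ∑ s ∈ S, permEps n s

/-- The maximal chain associated to a permutation `v ∈ 𝔖_{n+1}`:
`S_p(v) = {v(n+2−p), …, v(n+1)}` (1-indexed); here `p : Fin n` (0-indexed)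
corresponds to the subset of size `p+1`. -/
def chainOfPerm (n : ℕ) (v : Equiv.Perm (Fin (n + 1))) : Fin n → Finset (Fin (n + 1)) :=
  fun p => (Finset.univ.filter (fun i : Fin (n + 1) => n - (p : ℕ) ≤ (i : ℕ))).image v

/-- The extension `x̃` of `x ∈ ℝⁿ` to `[n+1]` coordinates: `x̃ₛ = xₛ` for
`1 ≤ s ≤ n` and `x̃_{n+1} = 0`. -/
def tild (n : ℕ) (x : Fin n → ℝ) (s : Fin (n + 1)) : ℝ :=
  if h : (s : ℕ) < n then x ⟨(s : ℕ), h⟩ else 0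

theorem permU_apply (n : ℕ) (S : Finset (Fin (n + 1))) (i : Fin n) :
    permU n S i = (if i.castSucc ∈ S then 1 else 0) - (if Fin.last n ∈ S then 1 else 0) := by
  have key : ∀ T : Finset (Fin (n + 1)),
      (∑ s ∈ T, permEps n s) i = if i.castSucc ∈ T then 1 else 0 := by
    intro T
    rw [Finset.sum_apply, ← Finset.sum_ite_eq T i.castSucc (fun _ => (1 : ℤ))]
    refine Finset.sum_congr rfl fun s _ => ?_
    simp [permEps, Fin.ext_iff]
  unfold permU
  split_ifs with h1 h2 h2
  · simp [key, h2]
  · simp [key, h2]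
  · simp [key, h2]
  · simp [key, h2]

theorem mem_chain (n : ℕ) (v : Equiv.Perm (Fin (n + 1))) (p : Fin n) (s : Fin (n + 1)) :
    s ∈ chainOfPerm n v p ↔ n - (p : ℕ) ≤ (v.symm s : ℕ) := by
  simp only [chainOfPerm, Finset.mem_image, Finset.mem_filter, Finset.mem_univ, true_and]
  constructor
  · rintro ⟨a, ha, rfl⟩
    simpa using ha
  · intro h
    exact ⟨v.symm s, h, by simp⟩

theorem tele (n : ℕ) (F : ℕ → ℝ) (k : ℕ) (hk : k ≤ n) :
    ∑ p : Fin n, (F (n - p) - F (n - p - 1)) * (if n - (p : ℕ) ≤ k then (1 : ℝ) else 0)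
      = F k - F 0 := by
  rw [Fin.sum_univ_eq_sum_range
    (fun p => (F (n - p) - F (n - p - 1)) * (if n - p ≤ k then (1 : ℝ) else 0)) n,
    ← Finset.sum_range_reflect, ← Finset.sum_range_sub F k]
  rw [← Finset.sum_subset (Finset.range_subset_range.2 hk)]
  · refine Finset.sum_congr rfl fun q hq => ?_
    have hq' := Finset.mem_range.1 hq
    have e : n - (n - 1 - q) = q + 1 := by omega
    rw [e, if_pos (by omega)]
    simp
  · intro q hq hq'
    rw [Finset.mem_range] at hq hq'
    rw [if_neg (by omega), mul_zero]

/-- Each maximal cone of the permutohedral fan is a closed Weyl chamber of type `Aₙ`: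
for `v ∈ 𝔖_{n+1}`, the cone of nonnegative combinations of
`u_{S_1(v)}, …, u_{S_n(v)}` equals `{x ∈ ℝⁿ : x̃_{v(1)} ≤ ⋯ ≤ x̃_{v(n+1)}}`. -/
theorem cone_of_chainOfPerm_eq_weyl_chamber (n : ℕ) (hn : 1 ≤ n)
    (v : Equiv.Perm (Fin (n + 1))) :
    {x : Fin n → ℝ | ∃ a : Fin n → ℝ, (∀ p, 0 ≤ a p) ∧
        ∀ i, x i = ∑ p, a p * (permU n (chainOfPerm n v p) i : ℝ)} =
      {x : Fin n → ℝ | ∀ i j : Fin (n + 1), i ≤ j → tild n x (v i) ≤ tild n x (v j)} := by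
  ext x
  simp only [Set.mem_setOf_eq, permU_apply, mem_chain]
  constructor
  · rintro ⟨a, ha, hx⟩
    have key : ∀ s : Fin (n + 1), tild n x s = ∑ p : Fin n, a p *
        ((if n - (p : ℕ) ≤ (v.symm s : ℕ) then (1 : ℝ) else 0) -
          (if n - (p : ℕ) ≤ (v.symm (Fin.last n) : ℕ) then (1 : ℝ) else 0)) := by
      intro s
      induction s using Fin.lastCases with
      | last => simp [tild]
      | cast i =>
        have : tild n x i.castSucc = x i := by simp [tild]
        rw [this, hx]
        push_cast
        rfl
    intro i j hij
    have hij' : (i : ℕ) ≤ j := hij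
    rw [key, key]
    refine Finset.sum_le_sum fun p _ => mul_le_mul_of_nonneg_left ?_ (ha p)
    simp only [Equiv.symm_apply_apply]
    refine sub_le_sub_right ?_ _
    split_ifs
    · exact le_rfl
    · omega
    · exact zero_le_one
    · exact le_rfl
  · intro h
    let F : ℕ → ℝ := fun k => tild n x (v ⟨min k n, by omega⟩)
    have hF : ∀ s, F (v.symm s : ℕ) = tild n x s := by
      intro s
      have : (⟨min (v.symm s : ℕ) n, by omega⟩ : Fin (n + 1)) = v.symm s := by
        ext
        simp only
        omega
      simp only [F, this, Equiv.apply_symm_apply]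
    refine ⟨fun p => F (n - p) - F (n - p - 1), fun p => ?_, fun i => ?_⟩
    · refine sub_nonneg.2 (h _ _ ?_)
      rw [Fin.mk_le_mk]
      omega
    · push_cast
      simp only [mul_sub (F _ - F _), Finset.sum_sub_distrib]
      rw [tele n F _ (by omega), tele n F _ (by omega), hF, hF]
      simp [tild]
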